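/- Let E be a real normed space, let k ≥ 0, let δ : (0,∞) → (0,∞) be a function with iterates δ_m, and let S, T be subsets of E with ∅ ≠ S ⊆ T such that S ↪_k T and O_{δ(ε)}(y) ∩ S ↪_i O_ε(y) ∩ S for every y ∈ E, every ε > 0 and every 0 ≤ i < k. Then O_{δ_k(ε)}(S) ↪_k O_ε(T) for every ε > 0. -/

import Mathlib

open Metric Set

/-- `S ↪ₖ B`: every continuous map of the `k`-sphere (unit sphere of `ℝ^{k+1}`) into `S`
extends to a continuous map of the closed unit `(k+1)`-ball into `B`. -/
def EmbedK {Y : Type*} [TopologicalSpace Y] (k : ℕ) (S B : Set Y) : Prop :=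
  ∀ g : sphere (0 : EuclideanSpace ℝ (Fin (k + 1))) 1 → Y,
    Continuous g → (∀ p, g p ∈ S) →
      ∃ h : closedBall (0 : EuclideanSpace ℝ (Fin (k + 1))) 1 → Y,
        Continuous h ∧ (∀ p, h p ∈ B) ∧
          ∀ p : sphere (0 : EuclideanSpace ℝ (Fin (k + 1))) 1,
            h ⟨p.1, sphere_subset_closedBall p.2⟩ = g p

/-- Lower semi-continuity of a set-valued mapping. -/
def LSC {X Y : Type*} [TopologicalSpace X] [TopologicalSpace Y] (Φ : X → Set Y) : Prop :=
  ∀ U : Set Y, IsOpen U → IsOpen {x | (Φ x ∩ U).Nonempty}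

/-- Lower locally constant set-valued mapping. -/
def LowerLocallyConstant {X Y : Type*} [TopologicalSpace X] [TopologicalSpace Y]
    (φ : X → Set Y) : Prop :=
  ∀ K : Set Y, IsCompact K → IsOpen {x | K ⊆ φ x}

/-- `dim X ≤ m`: every open cover has an open refinement (still a cover) such that any
`m + 2` pairwise distinct members of the refinement have empty intersection. -/
def DimLE (X : Type*) [TopologicalSpace X] (m : ℤ) : Prop :=
  ∀ 𝒰 : Set (Set X), (∀ U ∈ 𝒰, IsOpen U) → ⋃₀ 𝒰 = univ →
    ∃ 𝒱 : Set (Set X), (∀ V ∈ 𝒱, IsOpen V) ∧ ⋃₀ 𝒱 = univ ∧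
      (∀ V ∈ 𝒱, ∃ U ∈ 𝒰, V ⊆ U) ∧
      ∀ σ : Finset (Set X), ↑σ ⊆ 𝒱 → (σ.card : ℤ) = m + 2 → ⋂₀ (σ : Set (Set X)) = ∅

/-- The open `ε`-neighbourhood `O_ε(S)` of a set `S` in a metric space. -/
def ONbhd {Y : Type*} [PseudoMetricSpace Y] (ε : ℝ) (S : Set Y) : Set Y :=
  ⋃ y ∈ S, ball y ε

/-!
A map `g` of the unit sphere of `ℝ^{k+1}` into the neighbourhood of `S` is replaced by a nearby
map `f` into `S`, a continuous selection of `x ↦ ball (g x) (r k) ∩ S`. The sets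
`ball (g x) (r i) ∩ S` with `i ≤ k` are enlargements in each of which the `i - 1`-spheres of the
previous one bound, and by compactness whatever works over one point works over a neighbourhood.
Hence one can choose `k + 1` finite closed covers one after the other, each time extending a map of
the nerve of the covers already chosen over cones, dimension by dimension; a simplex of this nerve
uses at most one cell of each cover. A cover of the sphere by `k + 1` disjoint families of small
open sets has a partition of unity with values in the nerve, whose composite with the map is `f`.
Cubes of side `1 / N` are such families: each coordinate of a point lies on walls of at most one of
`k + 1` distinct nonzero diagonal shifts of the lattice, and on the sup-norm sphere some coordinate
is `±1`, hence on walls of none, so one of the shifts leaves the point inside an open cube.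

Finally `f` extends to a map `h` of the ball into `T`, and adding `‖v‖ • (g - f) (v / ‖v‖)` to `h v`
corrects the boundary values while moving no point by `r k` or more.
-/

section Extension

variable {Y Z Z' : Type*} [TopologicalSpace Y] [TopologicalSpace Z] [TopologicalSpace Z']

/-- Every map of `P` into `A` extends to a map of `Q` into `B`. Maps are total functions that are
continuous on the relevant subset, so that pieces can be glued without passing to subtypes. -/
def ExtendsOver (P Q : Set Z) (A B : Set Y) : Prop :=
  ∀ g : Z → Y, ContinuousOn g P → MapsTo g P A →
    ∃ h : Z → Y, ContinuousOn h Q ∧ MapsTo h Q B ∧ EqOn h g P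

lemma ExtendsOver.of_leftInvOn {P Q : Set Z} {P' Q' : Set Z'} {A B : Set Y}
    (hPQ : ExtendsOver P Q A B) {i : Z' → Z} {j : Z → Z'} (hi : ContinuousOn i Q')
    (hiQ : MapsTo i Q' Q) (hiP : MapsTo i P' P) (hj : ContinuousOn j P) (hjP : MapsTo j P P')
    (hji : LeftInvOn j i P') : ExtendsOver P' Q' A B := by
  intro g hg hgA
  obtain ⟨h, hc, hB, hext⟩ := hPQ (g ∘ j) (hg.comp hj hjP) (hgA.comp hjP)
  refine ⟨h ∘ i, hc.comp hi hiQ, hB.comp hiQ, fun p hp => ?_⟩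
  rw [Function.comp_apply, hext (hiP hp), Function.comp_apply, hji hp]

lemma extendsOver_image_iff (e : Z ≃ₜ Z') {P Q : Set Z} {A B : Set Y} :
    ExtendsOver (e '' P) (e '' Q) A B ↔ ExtendsOver P Q A B := by
  constructor
  · intro h
    exact h.of_leftInvOn e.continuous.continuousOn (mapsTo_image e Q) (mapsTo_image e P)
      e.symm.continuous.continuousOn (by rintro _ ⟨p, hp, rfl⟩; simpa using hp)
      fun p _ => e.symm_apply_apply p
  · intro h
    exact h.of_leftInvOn e.symm.continuous.continuousOn
      (by rintro _ ⟨p, hp, rfl⟩; simpa using hp) (by rintro _ ⟨p, hp, rfl⟩; simpa using hp)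
      e.continuous.continuousOn (mapsTo_image e P) fun p _ => e.apply_symm_apply p

lemma ExtendsOver.attach {P Q W : Set Z} {A B : Set Y} (hPQ : ExtendsOver P Q A B)
    (hQ : IsClosed Q) (hW : IsClosed W) (hPW : P ⊆ W) (hWQ : W ∩ Q ⊆ P) {g : Z → Y}
    (hg : ContinuousOn g W) (hgA : MapsTo g P A) :
    ∃ h : Z → Y, ContinuousOn h (W ∪ Q) ∧ EqOn h g W ∧ MapsTo h Q B := by
  classical
  obtain ⟨f, hf, hfB, hfg⟩ := hPQ g (hg.mono hPW) hgA
  have hW_eq : EqOn (W.piecewise g f) g W := piecewise_eqOn W g f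
  have hQ_eq : EqOn (W.piecewise g f) f Q := by
    intro z hz
    by_cases hzW : z ∈ W
    · rw [hW_eq hzW, hfg (hWQ ⟨hzW, hz⟩)]
    · rw [piecewise_eq_of_notMem _ _ _ hzW]
  exact ⟨W.piecewise g f, (hg.congr hW_eq).union_of_isClosed (hf.congr hQ_eq) hW hQ, hW_eq,
    hfB.congr hQ_eq.symm⟩

lemma exists_continuousOn_eqOn_of_continuous [Nonempty Y] {Q : Set Z} {h : Q → Y}
    (hh : Continuous h) : ∃ H : Z → Y, ContinuousOn H Q ∧ ∀ q : Q, H q = h q := by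
  classical
  refine ⟨Function.extend Subtype.val h fun _ => Classical.arbitrary Y, ?_,
    Subtype.val_injective.extend_apply h _⟩
  rw [continuousOn_iff_continuous_domRestrict]
  exact hh.congr fun q => (Subtype.val_injective.extend_apply h _ q).symm

lemma exists_continuousOn_iUnion_of_isClosed {κ : Type*} [Finite κ] [Nonempty κ] {s : κ → Set Z}
    {f : κ → Z → Y} (hs : ∀ i, IsClosed (s i)) (hf : ∀ i, ContinuousOn (f i) (s i))
    (hagree : ∀ i j, EqOn (f i) (f j) (s i ∩ s j)) :
    ∃ F : Z → Y, ContinuousOn F (⋃ i, s i) ∧ ∀ i, EqOn F (f i) (s i) := by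
  classical
  have hpiece : ∀ z, ∃ i, ∀ j, z ∈ s j → z ∈ s i := by
    intro z
    by_cases h : ∃ i, z ∈ s i
    · exact h.imp fun i hi _ _ => hi
    · exact ⟨Classical.arbitrary κ, fun j hj => absurd ⟨j, hj⟩ h⟩
  choose piece hpiece using hpiece
  have heq : ∀ i, EqOn (fun z => f (piece z) z) (f i) (s i) := fun i z hz =>
    hagree _ _ ⟨hpiece z i hz, hz⟩
  exact ⟨_, (locallyFinite_of_finite s).continuousOn_iUnion hs fun i => (hf i).congr (heq i), heq⟩

end Extension

section Embed

variable {Y : Type*} [TopologicalSpace Y] {k : ℕ} {A B : Set Y}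

lemma EmbedK.subset (h : EmbedK k A B) : A ⊆ B := by
  intro a ha
  obtain ⟨f, -, hfB, hf⟩ := h (fun _ => a) continuous_const fun _ => ha
  rw [← hf ⟨EuclideanSpace.single 0 1, by simp⟩]
  exact hfB _

lemma embedK_iff_extendsOver_euclidean :
    EmbedK k A B ↔ ExtendsOver (sphere (0 : EuclideanSpace ℝ (Fin (k + 1))) 1)
      (closedBall 0 1) A B := by
  constructor
  · intro h g hg hgA
    have : Nonempty Y := ⟨g 0⟩
    obtain ⟨f, hf, hfB, hfg⟩ :=
      h (fun p => g p) (continuousOn_iff_continuous_domRestrict.1 hg) fun p => hgA p.2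
    obtain ⟨F, hF, hFf⟩ := exists_continuousOn_eqOn_of_continuous hf
    refine ⟨F, hF, fun p hp => ?_, fun p hp => ?_⟩
    · rw [hFf ⟨p, hp⟩]
      exact hfB _
    · rw [hFf ⟨p, sphere_subset_closedBall hp⟩, hfg ⟨p, hp⟩]
  · intro h g hg hgA
    have : Nonempty Y := ⟨g ⟨EuclideanSpace.single 0 1, by simp⟩⟩
    obtain ⟨G, hG, hGg⟩ := exists_continuousOn_eqOn_of_continuous hg
    obtain ⟨F, hF, hFB, hFG⟩ := h G hG fun p hp => by
      rw [hGg ⟨p, hp⟩]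
      exact hgA _
    exact ⟨fun p => F p, continuousOn_iff_continuous_domRestrict.1 hF, fun p => hFB p.2, fun p =>
      (hFG p.2).trans (hGg p)⟩

variable {V : Type*} [NormedAddCommGroup V] [NormedSpace ℝ V] [FiniteDimensional ℝ V]

lemma embedK_iff_extendsOver_frontier (hV : Module.finrank ℝ V = k + 1) {Q : Set V}
    (hQ : Convex ℝ Q) (hQc : IsCompact Q) (hQi : (interior Q).Nonempty) :
    EmbedK k A B ↔ ExtendsOver (frontier Q) Q A B := by
  let L : V ≃L[ℝ] EuclideanSpace ℝ (Fin (k + 1)) :=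
    ContinuousLinearEquiv.ofFinrankEq (by rw [hV, finrank_euclideanSpace_fin])
  have hLc : IsCompact (L '' Q) := hQc.image L.continuous
  have hLi : interior (L '' Q) = L '' interior Q := (L.toHomeomorph.image_interior Q).symm
  have hLf : frontier (L '' Q) = L '' frontier Q := (L.toHomeomorph.image_frontier Q).symm
  obtain ⟨e, -, he_closure, he_frontier⟩ :=
    exists_homeomorph_image_interior_closure_frontier_eq_unitBall (s := L '' Q)
      (hQ.linear_image L.toLinearMap) (hLi ▸ hQi.image L) hLc.isBounded
  rw [hLc.isClosed.closure_eq] at he_closure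
  rw [hLf] at he_frontier
  rw [embedK_iff_extendsOver_euclidean, ← he_closure, ← he_frontier, extendsOver_image_iff]
  exact extendsOver_image_iff L.toHomeomorph

lemma embedK_iff_extendsOver_closedBall (hV : Module.finrank ℝ V = k + 1) :
    EmbedK k A B ↔ ExtendsOver (sphere (0 : V) 1) (closedBall 0 1) A B := by
  rw [embedK_iff_extendsOver_frontier hV (convex_closedBall (0 : V) 1) (isCompact_closedBall 0 1)
    ⟨0, by simp [interior_closedBall]⟩, frontier_closedBall _ one_ne_zero]

end Embed

section Cube

variable {ι Y : Type*} [TopologicalSpace Y]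

/-- The face of the unit cube `[0,1]^ι` spanned by the coordinates in `J`. -/
def cubeFace (J : Finset ι) : Set (ι → ℝ) :=
  Icc 0 ((J : Set ι).indicator 1)

/-- The relative boundary of `cubeFace J`. -/
def cubeFaceBoundary (J : Finset ι) : Set (ι → ℝ) :=
  {u ∈ cubeFace J | ∃ j ∈ J, u j = 0 ∨ u j = 1}

/-- The union of the faces of `[0,1]^ι` that miss the vertex `0`. The far part of `cubeFace J` is
a copy of the simplex on `J`, and `cubeFace J` is the cone over it with apex `0`. -/
def farFaces (ι : Type*) : Set (ι → ℝ) :=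
  {u | ∃ i, u i = 1}

/-- The cone over the simplicial complex `𝒦`, as a union of faces of the cube. -/
def cubicalCone (𝒦 : Set (Finset ι)) : Set (ι → ℝ) :=
  ⋃ J ∈ 𝒦, cubeFace J

lemma mem_cubeFace {J : Finset ι} {u : ι → ℝ} :
    u ∈ cubeFace J ↔ (∀ i, u i ∈ Icc 0 1) ∧ ∀ i ∉ J, u i = 0 := by
  simp only [cubeFace, mem_Icc, Pi.le_def, Pi.zero_apply, ← forall_and]
  refine forall_congr' fun i => ?_
  by_cases hi : i ∈ J
  · simp [hi]
  · simp only [Finset.mem_coe, hi, not_false_eq_true, indicator_of_notMem, forall_const]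
    constructor
    · intro h
      exact ⟨⟨h.1, h.2.trans zero_le_one⟩, le_antisymm h.2 h.1⟩
    · rintro ⟨h, hi⟩
      exact ⟨h.1, hi.le⟩

lemma mem_of_mem_cubeFace {J : Finset ι} {u : ι → ℝ} (hu : u ∈ cubeFace J) {i : ι} (hi : u i = 1) :
    i ∈ J := by
  by_contra hiJ
  rw [(mem_cubeFace.1 hu).2 i hiJ] at hi
  exact zero_ne_one hi

lemma isClosed_farFaces [Finite ι] : IsClosed (farFaces ι) := by
  simp only [farFaces, ofPred_exists]
  exact isClosed_iUnion_of_finite fun i => isClosed_eq (continuous_apply i) continuous_const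

lemma isClosed_cubicalCone [Finite ι] (𝒦 : Set (Finset ι)) : IsClosed (cubicalCone 𝒦) :=
  𝒦.toFinite.isClosed_biUnion fun _ _ => isClosed_Icc

lemma cubicalCone_insert (J : Finset ι) (𝒦 : Set (Finset ι)) :
    cubicalCone (insert J 𝒦) = cubeFace J ∪ cubicalCone 𝒦 :=
  biUnion_insert J 𝒦 cubeFace

lemma cubeFace_subset_cubicalCone {𝒦 : Set (Finset ι)} {J : Finset ι} (hJ : J ∈ 𝒦) :
    cubeFace J ⊆ cubicalCone 𝒦 :=
  subset_biUnion_of_mem hJ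

lemma cubicalCone_mono {𝒦 ℒ : Set (Finset ι)} (h : 𝒦 ⊆ ℒ) : cubicalCone 𝒦 ⊆ cubicalCone ℒ :=
  biUnion_subset_biUnion_left h

lemma mem_cubeFace_erase [DecidableEq ι] {J : Finset ι} {u : ι → ℝ} (hu : u ∈ cubeFace J) {j : ι}
    (hj : u j = 0) : u ∈ cubeFace (J.erase j) := by
  rw [mem_cubeFace] at hu ⊢
  refine ⟨hu.1, fun i hi => ?_⟩
  by_cases hij : i = j
  · rw [hij, hj]
  · exact hu.2 i fun hiJ => hi (Finset.mem_erase.2 ⟨hij, hiJ⟩)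

lemma mem_frontier_unitCube {κ : Type*} [Finite κ] {u : κ → ℝ} :
    u ∈ frontier (Icc (0 : κ → ℝ) 1) ↔ u ∈ Icc 0 1 ∧ ∃ j, u j = 0 ∨ u j = 1 := by
  rw [isClosed_Icc.frontier_eq, ← pi_univ_Icc, interior_pi_set finite_univ]
  simp only [Pi.zero_apply, Pi.one_apply, interior_Icc, mem_sdiff, mem_univ_pi, not_forall]
  refine and_congr_right fun hu => exists_congr fun j => ?_
  rw [mem_Ioo, (hu j).1.lt_iff_ne', (hu j).2.lt_iff_ne]
  tauto

lemma EmbedK.extendsOver_cubeFace {k : ℕ} {A B : Set Y} (h : EmbedK k A B) {J : Finset ι}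
    (hJ : J.card = k + 1) : ExtendsOver (cubeFaceBoundary J) (cubeFace J) A B := by
  classical
  have hcube : ExtendsOver (frontier (Icc (0 : J → ℝ) 1)) (Icc 0 1) A B := by
    refine (embedK_iff_extendsOver_frontier (by simp [hJ]) (convex_Icc 0 1) isCompact_Icc ?_).1 h
    refine ⟨fun _ => 1 / 2, ?_⟩
    rw [← pi_univ_Icc, interior_pi_set finite_univ]
    norm_num [mem_univ_pi]
  have hrestrict : MapsTo (fun u (i : J) => u i) (cubeFace J) (Icc 0 1) := fun u hu =>
    ⟨fun i => ((mem_cubeFace.1 hu).1 i).1, fun i => ((mem_cubeFace.1 hu).1 i).2⟩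
  let extendByZero : (J → ℝ) → ι → ℝ := fun v i => if hi : i ∈ J then v ⟨i, hi⟩ else 0
  have hcont : Continuous extendByZero := by
    refine continuous_pi fun i => ?_
    by_cases hi : i ∈ J <;> simp only [extendByZero, hi, dite_true, dite_false] <;> fun_prop
  refine hcube.of_leftInvOn (j := extendByZero) (by fun_prop) hrestrict ?_ hcont.continuousOn ?_ ?_
  · rintro u ⟨hu, j, hj, huj⟩
    exact mem_frontier_unitCube.2 ⟨hrestrict hu, ⟨j, hj⟩, huj⟩
  · intro v hv
    obtain ⟨hv01, j, hj⟩ := mem_frontier_unitCube.1 hv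
    refine ⟨mem_cubeFace.2 ⟨fun i => ?_, fun i hi => dif_neg hi⟩, j, j.2, ?_⟩
    · by_cases hi : i ∈ J
      · simpa [extendByZero, hi] using ⟨hv01.1 ⟨i, hi⟩, hv01.2 ⟨i, hi⟩⟩
      · simp [extendByZero, hi]
    · simpa [extendByZero] using hj
  · rintro u ⟨hu, -⟩
    funext i
    by_cases hi : i ∈ J
    · simp [extendByZero, hi]
    · simp [extendByZero, hi, (mem_cubeFace.1 hu).2 i hi]

end Cube

section Aspherical

variable {Y : Type*} [TopologicalSpace Y] {k : ℕ} {A : ℕ → Set Y}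

/-- A nonempty set followed by `k` enlargements, the `i`-th of which kills all maps of the
`i`-sphere. -/
def IsAspherical (k : ℕ) (A : ℕ → Set Y) : Prop :=
  (A 0).Nonempty ∧ ∀ i < k, EmbedK i (A i) (A (i + 1))

lemma IsAspherical.monotoneOn (hA : IsAspherical k A) : MonotoneOn A (Iic k) := by
  intro i _ j hj hij
  induction j, hij using Nat.le_induction with
  | base => exact le_rfl
  | succ j _ ih => exact (ih (mem_Iic.2 (Nat.le_of_succ_le hj))).trans (hA.2 j hj).subset

variable {ι : Type*}

lemma IsAspherical.extendsOver_cubeFace (hA : IsAspherical k A) {J : Finset ι}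
    (hJ : J.card ≤ k) :
    ExtendsOver (cubeFaceBoundary J) (cubeFace J) (A (J.card - 1)) (A J.card) := by
  rcases hcard : J.card with _ | n
  · obtain ⟨a, ha⟩ := hA.1
    refine fun g _ _ => ⟨fun _ => a, continuousOn_const, fun _ _ => ha, ?_⟩
    rintro u ⟨-, j, hj, -⟩
    simp [Finset.card_eq_zero.1 hcard] at hj
  · exact (hA.2 n (by omega)).extendsOver_cubeFace hcard

lemma IsAspherical.exists_extension_insert [Finite ι]
    (hA : IsAspherical k A) {s : Finset (Finset ι)} {J : Finset ι} (hJ : J.card ≤ k)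
    (hlow : IsLowerSet (insert J s : Set (Finset ι))) (hmax : ∀ J' ∈ s, ¬ J ⊆ J')
    {D : Set (ι → ℝ)} (hD : IsClosed D) (hDfar : D ⊆ farFaces ι)
    (hJD : cubeFace J ∩ farFaces ι ⊆ D) {H : (ι → ℝ) → Y}
    (hH : ContinuousOn H (D ∪ cubicalCone s))
    (hHD : MapsTo H (cubeFace J ∩ farFaces ι) (A (J.card - 1)))
    (hHA : ∀ J' ∈ s, MapsTo H (cubeFace J') (A J'.card)) :
    ∃ H' : (ι → ℝ) → Y, ContinuousOn H' (D ∪ cubicalCone (insert J s : Set (Finset ι))) ∧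
      EqOn H' H (D ∪ cubicalCone s) ∧ MapsTo H' (cubeFace J) (A J.card) := by
  classical
  have herase : ∀ j ∈ J, J.erase j ∈ s := fun j hj =>
    (hlow (J.erase_subset j) (mem_insert _ _)).resolve_left (Finset.erase_ne_self.2 hj)
  have hboundary : ∀ u ∈ cubeFaceBoundary J,
      u ∈ cubeFace J ∩ farFaces ι ∨ ∃ j ∈ J, u ∈ cubeFace (J.erase j) := by
    rintro u ⟨hu, j, hj, huj | huj⟩
    · exact .inr ⟨j, hj, mem_cubeFace_erase hu huj⟩
    · exact .inl ⟨hu, j, huj⟩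
  have hoverlap : (D ∪ cubicalCone s) ∩ cubeFace J ⊆ cubeFaceBoundary J := by
    rintro u ⟨huD | hus, hu⟩
    · obtain ⟨i, hi⟩ := hDfar huD
      exact ⟨hu, i, mem_of_mem_cubeFace hu hi, .inr hi⟩
    · obtain ⟨J', hJ', huJ'⟩ := mem_iUnion₂.1 hus
      obtain ⟨j, hj, hjJ'⟩ := Finset.not_subset.1 (hmax J' hJ')
      exact ⟨hu, j, hj, .inl ((mem_cubeFace.1 huJ').2 j hjJ')⟩
  have hattach : cubeFaceBoundary J ⊆ D ∪ cubicalCone s := fun u hu =>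
    (hboundary u hu).imp (@hJD u) fun ⟨j, hj, huj⟩ =>
      cubeFace_subset_cubicalCone (herase j hj) huj
  have hHboundary : MapsTo H (cubeFaceBoundary J) (A (J.card - 1)) := by
    intro u hu
    obtain hfar | ⟨j, hj, huj⟩ := hboundary u hu
    · exact hHD hfar
    · rw [← Finset.card_erase_of_mem hj]
      exact hHA _ (herase j hj) huj
  rw [cubicalCone_insert, union_comm (cubeFace J), ← union_assoc]
  exact (hA.extendsOver_cubeFace hJ).attach isClosed_Icc
    (hD.union (isClosed_cubicalCone _)) hattach hoverlap hH hHboundary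

lemma IsAspherical.exists_cone_extension [Finite ι] (hA : IsAspherical k A) {𝒦 : Set (Finset ι)}
    (h𝒦 : IsLowerSet 𝒦) (hcard : ∀ J ∈ 𝒦, J.card ≤ k) {F : (ι → ℝ) → Y}
    (hF : ContinuousOn F (cubicalCone 𝒦 ∩ farFaces ι))
    (hFA : ∀ J ∈ 𝒦, MapsTo F (cubeFace J ∩ farFaces ι) (A (J.card - 1))) :
    ∃ H : (ι → ℝ) → Y, ContinuousOn H (cubicalCone 𝒦) ∧
      EqOn H F (cubicalCone 𝒦 ∩ farFaces ι) ∧ ∀ J ∈ 𝒦, MapsTo H (cubeFace J) (A J.card) := by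
  classical
  set D := cubicalCone 𝒦 ∩ farFaces ι
  have hDc : IsClosed D := (isClosed_cubicalCone 𝒦).inter isClosed_farFaces
  have hfar : ∀ J ∈ 𝒦, cubeFace J ∩ farFaces ι ⊆ D := fun J hJ =>
    inter_subset_inter_left _ (cubeFace_subset_cubicalCone hJ)
  have partial_extension : ∀ s : Finset (Finset ι), (s : Set (Finset ι)) ⊆ 𝒦 →
      IsLowerSet (s : Set (Finset ι)) → ∃ H : (ι → ℝ) → Y,
        ContinuousOn H (D ∪ cubicalCone s) ∧ EqOn H F D ∧
          ∀ J ∈ s, MapsTo H (cubeFace J) (A J.card) := by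
    refine fun s => Finset.induction_on_max_value Finset.card s
      (fun _ _ => ⟨F, by simpa [cubicalCone] using hF, fun _ _ => rfl, by simp⟩) ?_
    intro J s hJs hmax ih hsub hlow
    rw [Finset.coe_insert] at hsub hlow ⊢
    have hmax' : ∀ J' ∈ s, ¬ J ⊆ J' := fun J' hJ' hJJ' =>
      hJs (Finset.eq_of_subset_of_card_le hJJ' (hmax J' hJ') ▸ hJ')
    have hslow : IsLowerSet (s : Set (Finset ι)) := fun J' I hIJ' hJ' =>
      (hlow hIJ' (mem_insert_of_mem _ hJ')).resolve_left fun hI => hmax' J' hJ' (hI ▸ hIJ')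
    have hJ := hsub (mem_insert J s)
    obtain ⟨H, hH, hHF, hHA⟩ := ih ((subset_insert _ _).trans hsub) hslow
    obtain ⟨H', hH', hH'H, hH'A⟩ := hA.exists_extension_insert (hcard J hJ) hlow hmax' hDc
      inter_subset_right (hfar J hJ) hH ((hFA J hJ).congr (hHF.symm.mono (hfar J hJ))) hHA
    refine ⟨H', hH', (hH'H.mono subset_union_left).trans hHF, ?_⟩
    rintro J' hJ'
    obtain rfl | hJ' := Finset.mem_insert.1 hJ'
    · exact hH'A
    · exact (hHA J' hJ').congr
        (hH'H.mono ((cubeFace_subset_cubicalCone hJ').trans subset_union_right)).symm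
  obtain ⟨H, hH, hHF, hHA⟩ := partial_extension 𝒦.toFinite.toFinset (by simp) (by simpa using h𝒦)
  exact ⟨H, hH.mono (by simp), hHF, by simpa using hHA⟩

end Aspherical

open scoped Topology

section Nerve

universe u v

variable {ι κ : Type*} {X : Type u} {Y : Type v}

/-- The part over `A` of the nerve of the cells `C`, restricted to those simplices that contain at
most one cell of each level. -/
def rainbowNerve (level : ι → ℕ) (C : ι → Set X) (A : Set X) : Set (Finset ι) :=
  {J | InjOn level J ∧ ∃ x ∈ A, ∀ c ∈ J, x ∈ C c}

section RainbowNerve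

variable {level : ι → ℕ} {C : ι → Set X} {A B : Set X} {J : Finset ι}

lemma isLowerSet_rainbowNerve : IsLowerSet (rainbowNerve level C A) :=
  fun _ _ hIJ ⟨hJ, x, hx, hxJ⟩ => ⟨hJ.mono hIJ, x, hx, fun c hc => hxJ c (hIJ hc)⟩

lemma rainbowNerve_mono (hAB : A ⊆ B) : rainbowNerve level C A ⊆ rainbowNerve level C B :=
  fun _ ⟨hJ, x, hx, hxJ⟩ => ⟨hJ, x, hAB hx, hxJ⟩

lemma card_le_of_mem_rainbowNerve {m : ℕ} (hlevel : ∀ c, level c < m)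
    (hJ : J ∈ rainbowNerve level C A) : J.card ≤ m := by
  simpa using Finset.card_le_card_of_injOn level (t := Finset.range m)
    (fun c _ => Finset.mem_coe.2 (Finset.mem_range.2 (hlevel c))) hJ.1

variable {m : ℕ} {N : κ → Set X} {J : Finset (ι ⊕ κ)}

lemma toLeft_mem_rainbowNerve
    (hJ : J ∈ rainbowNerve (Sum.elim level fun _ => m) (Sum.elim C N) A) :
    J.toLeft ∈ rainbowNerve level C A := by
  obtain ⟨hinj, x, hx, hxJ⟩ := hJ
  refine ⟨fun c hc d hd hcd => ?_, x, hx, fun c hc => hxJ _ (Finset.mem_toLeft.1 hc)⟩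
  exact Sum.inl_injective (hinj (Finset.mem_toLeft.1 hc) (Finset.mem_toLeft.1 hd) hcd)

lemma toLeft_mem_rainbowNerve_of_inr_mem
    (hJ : J ∈ rainbowNerve (Sum.elim level fun _ => m) (Sum.elim C N) A) {b : κ}
    (hb : .inr b ∈ J) : J.toLeft ∈ rainbowNerve level C (N b) := by
  have ⟨hinj, x, _, hxJ⟩ := hJ
  exact toLeft_mem_rainbowNerve (m := m) (N := N) ⟨hinj, x, hxJ _ hb, hxJ⟩

lemma eq_of_inr_mem_of_mem_rainbowNerve
    (hJ : J ∈ rainbowNerve (Sum.elim level fun _ => m) (Sum.elim C N) A) {b b' : κ}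
    (hb : .inr b ∈ J) (hb' : .inr b' ∈ J) : b = b' :=
  Sum.inr_injective (hJ.1 hb hb' rfl)

lemma card_toLeft_lt_of_inr_mem {b : κ} (hb : .inr b ∈ J) : J.toLeft.card < J.card := by
  rw [← J.card_toLeft_add_card_toRight]
  exact Nat.lt_add_of_pos_right (Finset.card_pos.2 ⟨b, Finset.mem_toRight.2 hb⟩)

lemma comp_inl_mem_cubeFace {u : ι ⊕ κ → ℝ} (hu : u ∈ cubeFace J) :
    u ∘ Sum.inl ∈ cubeFace J.toLeft := by
  rw [mem_cubeFace] at hu ⊢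
  exact ⟨fun i => hu.1 _, fun i hi => hu.2 _ fun h => hi (Finset.mem_toLeft.2 h)⟩

lemma comp_inl_mem_cubicalCone {u : ι ⊕ κ → ℝ}
    (hu : u ∈ cubicalCone (rainbowNerve (Sum.elim level fun _ => m) (Sum.elim C N) A)) :
    u ∘ Sum.inl ∈ cubicalCone (rainbowNerve level C A) := by
  obtain ⟨J, hJ, huJ⟩ := mem_iUnion₂.1 hu
  exact cubeFace_subset_cubicalCone (toLeft_mem_rainbowNerve hJ) (comp_inl_mem_cubeFace huJ)

lemma comp_inl_mem_cubicalCone_of_inr_eq_one {u : ι ⊕ κ → ℝ}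
    (hu : u ∈ cubicalCone (rainbowNerve (Sum.elim level fun _ => m) (Sum.elim C N) A)) {b : κ}
    (hb : u (.inr b) = 1) : u ∘ Sum.inl ∈ cubicalCone (rainbowNerve level C (N b)) := by
  obtain ⟨J, hJ, huJ⟩ := mem_iUnion₂.1 hu
  have hbJ := mem_of_mem_cubeFace huJ hb
  exact cubeFace_subset_cubicalCone (toLeft_mem_rainbowNerve_of_inr_mem hJ hbJ)
    (comp_inl_mem_cubeFace huJ)

lemma eq_of_inr_eq_one {u : ι ⊕ κ → ℝ}
    (hu : u ∈ cubicalCone (rainbowNerve (Sum.elim level fun _ => m) (Sum.elim C N) A)) {b b' : κ}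
    (hb : u (.inr b) = 1) (hb' : u (.inr b') = 1) : b = b' := by
  obtain ⟨J, hJ, huJ⟩ := mem_iUnion₂.1 hu
  exact eq_of_inr_mem_of_mem_rainbowNerve hJ (mem_of_mem_cubeFace huJ hb)
    (mem_of_mem_cubeFace huJ hb')

lemma exists_continuousOn_farFaces_sum [TopologicalSpace Y] [Finite ι] [Finite κ]
    {F : (ι → ℝ) → Y} {H : κ → (ι → ℝ) → Y}
    (hF : ContinuousOn F (cubicalCone (rainbowNerve level C univ) ∩ farFaces ι))
    (hH : ∀ b, ContinuousOn (H b) (cubicalCone (rainbowNerve level C (N b))))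
    (hHF : ∀ b, EqOn (H b) F (cubicalCone (rainbowNerve level C (N b)) ∩ farFaces ι)) :
    let P := cubicalCone (rainbowNerve (Sum.elim level fun _ => m) (Sum.elim C N) univ)
    ∃ G : (ι ⊕ κ → ℝ) → Y, ContinuousOn G (P ∩ farFaces (ι ⊕ κ)) ∧
      (∀ u ∈ P, ∀ c, u (.inl c) = 1 → G u = F (u ∘ .inl)) ∧
        ∀ u ∈ P, ∀ b, u (.inr b) = 1 → G u = H b (u ∘ .inl) := by
  intro P
  have hP : IsClosed P := isClosed_cubicalCone _
  have hcomp : Continuous fun u : ι ⊕ κ → ℝ => u ∘ Sum.inl := by fun_prop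
  let piece : Option κ → Set (ι ⊕ κ → ℝ)
    | none => P ∩ (· ∘ Sum.inl) ⁻¹' farFaces ι
    | some b => P ∩ {u | u (.inr b) = 1}
  let f : Option κ → (ι ⊕ κ → ℝ) → Y
    | none => fun u => F (u ∘ Sum.inl)
    | some b => fun u => H b (u ∘ Sum.inl)
  have hpiece : ∀ o, IsClosed (piece o) := by
    rintro (_ | b)
    · exact hP.inter (isClosed_farFaces.preimage hcomp)
    · exact hP.inter (isClosed_eq (continuous_apply _) continuous_const)
  have hf : ∀ o, ContinuousOn (f o) (piece o) := by
    rintro (_ | b)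
    · exact hF.comp hcomp.continuousOn fun u hu =>
        ⟨comp_inl_mem_cubicalCone hu.1, hu.2⟩
    · exact (hH b).comp hcomp.continuousOn fun u hu =>
        comp_inl_mem_cubicalCone_of_inr_eq_one hu.1 hu.2
  have hagree : ∀ o o', EqOn (f o) (f o') (piece o ∩ piece o') := by
    rintro (_ | b) (_ | b') u ⟨⟨hu, hub⟩, -, hub'⟩
    · rfl
    · exact (hHF b' ⟨comp_inl_mem_cubicalCone_of_inr_eq_one hu hub', hub⟩).symm
    · exact hHF b ⟨comp_inl_mem_cubicalCone_of_inr_eq_one hu hub, hub'⟩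
    · rw [eq_of_inr_eq_one hu hub hub']
  obtain ⟨G, hG, hGf⟩ := exists_continuousOn_iUnion_of_isClosed hpiece hf hagree
  refine ⟨G, hG.mono ?_, fun u hu c hc => hGf none ⟨hu, c, hc⟩,
    fun u hu b hb => hGf (some b) ⟨hu, hb⟩⟩
  rintro u ⟨hu, c | b, huc⟩
  · exact mem_iUnion.2 ⟨none, hu, c, huc⟩
  · exact mem_iUnion.2 ⟨some b, hu, huc⟩

end RainbowNerve

variable [TopologicalSpace X] [TopologicalSpace Y] {φ : ℕ → X → Set Y} {m k : ℕ}

/-- A stage of the construction of a selection: `m` finite closed covers of `X`, given as the levels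
of one family of cells, and a map of the geometric realisation of their rainbow nerve, which sends
the simplices over `x` of dimension `d` into `φ d x`. The realisation is taken inside the far faces
of the cube. -/
structure NerveMap (φ : ℕ → X → Set Y) (m : ℕ) where
  ι : Type u
  finite : Finite ι
  level : ι → ℕ
  level_lt : ∀ c, level c < m
  cell : ι → Set X
  isClosed_cell : ∀ c, IsClosed (cell c)
  exists_mem_interior : ∀ l < m, ∀ x, ∃ c, level c = l ∧ x ∈ interior (cell c)
  toFun : (ι → ℝ) → Y
  continuousOn : ContinuousOn toFun (cubicalCone (rainbowNerve level cell univ) ∩ farFaces ι)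
  mapsTo : ∀ x, ∀ J ∈ rainbowNerve level cell {x},
    MapsTo toFun (cubeFace J ∩ farFaces ι) (φ (J.card - 1) x)

namespace NerveMap

attribute [instance] NerveMap.finite

/-- The map of the nerve extends, over the part above `A`, to the cone over the nerve, with the
cone over a `d`-dimensional simplex above `x ∈ A` sent into `φ (d + 1) x`. -/
def ConeExtendsOn (S : NerveMap φ m) (A : Set X) : Prop :=
  ∃ H : (S.ι → ℝ) → Y, ContinuousOn H (cubicalCone (rainbowNerve S.level S.cell A)) ∧
    EqOn H S.toFun (cubicalCone (rainbowNerve S.level S.cell A) ∩ farFaces S.ι) ∧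
      ∀ x ∈ A, ∀ J ∈ rainbowNerve S.level S.cell {x}, MapsTo H (cubeFace J) (φ J.card x)

lemma exists_coneExtendsOn [RegularSpace X] (S : NerveMap φ m)
    (hφ : ∀ i, LowerLocallyConstant (φ i)) (hm : m ≤ k) {y : X} (hy : IsAspherical k (φ · y)) :
    ∃ A ∈ 𝓝 y, IsClosed A ∧ S.ConeExtendsOn A := by
  set 𝒦 := rainbowNerve S.level S.cell {y}
  obtain ⟨H, hH, hHF, hHφ⟩ := hy.exists_cone_extension isLowerSet_rainbowNerve
    (fun J hJ => (card_le_of_mem_rainbowNerve S.level_lt hJ).trans hm)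
    (S.continuousOn.mono (inter_subset_inter_left _ (cubicalCone_mono
      (rainbowNerve_mono (subset_univ {y}))))) (S.mapsTo y)
  have hcells : ∀ᶠ x in 𝓝 y, ∀ c, x ∈ S.cell c → y ∈ S.cell c := by
    refine Filter.eventually_all.2 fun c => ?_
    by_cases hc : y ∈ S.cell c
    · exact .of_forall fun _ _ => hc
    · filter_upwards [(S.isClosed_cell c).isOpen_compl.mem_nhds hc] with x hx hxc
      exact absurd hxc hx
  have himages : ∀ᶠ x in 𝓝 y, ∀ J, J ∈ 𝒦 → MapsTo H (cubeFace J) (φ J.card x) := by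
    refine Filter.eventually_all.2 fun J => Filter.eventually_imp_distrib_left.2 fun hJ => ?_
    simp only [mapsTo_iff_image_subset]
    exact (hφ J.card _ (isCompact_Icc.image_of_continuousOn
      (hH.mono (cubeFace_subset_cubicalCone hJ)))).mem_nhds (hHφ J hJ).image_subset
  obtain ⟨A, hA, hAclosed, hAsub⟩ := exists_mem_nhds_isClosed_subset (hcells.and himages)
  have hnerve : rainbowNerve S.level S.cell A ⊆ 𝒦 := fun J ⟨hJ, x, hx, hxJ⟩ =>
    ⟨hJ, y, rfl, fun c hc => (hAsub hx).1 c (hxJ c hc)⟩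
  refine ⟨A, hA, hAclosed, H, hH.mono (cubicalCone_mono hnerve),
    hHF.mono (inter_subset_inter_left _ (cubicalCone_mono hnerve)), fun x hx J hJ => ?_⟩
  exact (hAsub hx).2 J (hnerve (rainbowNerve_mono (singleton_subset_iff.2 hx) hJ))

lemma nonempty_succ (S : NerveMap φ m) (hφ : ∀ x, MonotoneOn (φ · x) (Iic m)) {κ : Type u}
    [Finite κ] {N : κ → Set X} (hN : ∀ b, IsClosed (N b)) (hcover : ∀ x, ∃ b, x ∈ interior (N b))
    (hext : ∀ b, S.ConeExtendsOn (N b)) : Nonempty (NerveMap φ (m + 1)) := by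
  choose H hH hHF hHφ using hext
  obtain ⟨G, hG, hGF, hGH⟩ := exists_continuousOn_farFaces_sum (m := m) S.continuousOn hH hHF
  have hlevel : ∀ c : S.ι ⊕ κ, Sum.elim S.level (fun _ => m) c < m + 1 := by
    rintro (c | _)
    exacts [(S.level_lt c).trans m.lt_succ_self, m.lt_succ_self]
  have hinterior : ∀ l < m + 1, ∀ x, ∃ c, Sum.elim S.level (fun _ => m) c = l ∧
      x ∈ interior (Sum.elim S.cell N c) := by
    intro l hl x
    obtain hl | rfl := Nat.lt_succ_iff_lt_or_eq.1 hl
    · obtain ⟨c, hc⟩ := S.exists_mem_interior l hl x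
      exact ⟨.inl c, hc⟩
    · obtain ⟨b, hb⟩ := hcover x
      exact ⟨.inr b, rfl, hb⟩
  refine ⟨⟨S.ι ⊕ κ, inferInstance, Sum.elim S.level fun _ => m, hlevel, Sum.elim S.cell N,
    Sum.forall.2 ⟨S.isClosed_cell, hN⟩, hinterior, G, hG, fun x J hJ u ⟨huJ, hu⟩ => ?_⟩⟩
  have huP := cubeFace_subset_cubicalCone (rainbowNerve_mono (subset_univ {x}) hJ) huJ
  have hJleft := toLeft_mem_rainbowNerve hJ
  have huleft := comp_inl_mem_cubeFace huJ
  have hcard : J.card ≤ m + 1 := card_le_of_mem_rainbowNerve hlevel hJ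
  obtain ⟨c | b, hu⟩ := hu
  · have hle := J.card_toLeft_le
    rw [hGF u huP c hu]
    exact hφ x (mem_Iic.2 (by omega)) (mem_Iic.2 (by omega)) (by omega)
      (S.mapsTo x _ hJleft ⟨huleft, c, hu⟩)
  · have hbJ : Sum.inr b ∈ J := mem_of_mem_cubeFace huJ hu
    have hx : x ∈ N b := by
      obtain ⟨-, _, rfl, hxJ⟩ := hJ
      exact hxJ _ hbJ
    have hlt := card_toLeft_lt_of_inr_mem hbJ
    rw [hGH u huP b hu]
    exact hφ x (mem_Iic.2 (by omega)) (mem_Iic.2 (by omega)) (by omega)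
      (hHφ b x hx _ hJleft huleft)

lemma nonempty_of_isAspherical [Nonempty X] [CompactSpace X] [RegularSpace X]
    (hφ : ∀ i, LowerLocallyConstant (φ i)) (hA : ∀ x, IsAspherical k (φ · x)) (hm : m ≤ k + 1) :
    Nonempty (NerveMap φ m) := by
  induction m with
  | zero =>
    obtain ⟨y, -⟩ := (hA (Classical.arbitrary X)).1
    exact ⟨⟨PEmpty, inferInstance, nofun, nofun, nofun, nofun, nofun, fun _ => y,
      continuousOn_const, fun _ _ _ _ ⟨_, c, _⟩ => c.elim⟩⟩
  | succ m ih =>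
    have hmk : m ≤ k := Nat.succ_le_succ_iff.1 hm
    obtain ⟨S⟩ := ih (hmk.trans k.le_succ)
    choose N hN hNclosed hNext using fun y => S.exists_coneExtendsOn hφ hmk (hA y)
    obtain ⟨t, ht⟩ := CompactSpace.elim_nhds_subcover (fun y => interior (N y)) fun y =>
      interior_mem_nhds.2 (hN y)
    refine S.nonempty_succ (N := fun y : t => N y) (fun x => (hA x).monotoneOn.mono
      (Iic_subset_Iic.2 hmk)) (fun _ => hNclosed _) (fun x => ?_) fun _ => hNext _
    obtain ⟨y, hy, hxy⟩ := mem_iUnion₂.1 (ht.ge (mem_univ x))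
    exact ⟨⟨y, hy⟩, hxy⟩

end NerveMap

/-- Covering dimension at most `k` in the form of Ostrand's theorem: a finite family of open sets
whose levels `0, …, k` are covers shrinks to an open cover whose levels are disjoint families. -/
def OstrandDimLE (X : Type u) [TopologicalSpace X] (k : ℕ) : Prop :=
  ∀ (ι : Type u) [Finite ι] (level : ι → ℕ) (W : ι → Set X), (∀ c, IsOpen (W c)) →
    (∀ l ≤ k, ∀ x, ∃ c, level c = l ∧ x ∈ W c) →
      ∃ U : ι → Set X, (∀ c, IsOpen (U c)) ∧ (∀ c, U c ⊆ W c) ∧ (∀ x, ∃ c, x ∈ U c) ∧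
        ∀ x, InjOn level {c | x ∈ U c}

lemma exists_norm_apply_eq_norm [Fintype ι] [Nonempty ι] {E : Type*} [SeminormedAddCommGroup E]
    (f : ι → E) : ∃ i, ‖f i‖ = ‖f‖ := by
  obtain ⟨i, hi⟩ := Finite.exists_max fun i => ‖f i‖
  exact ⟨i, le_antisymm (norm_le_pi_norm f i) ((pi_norm_le_iff_of_nonneg (norm_nonneg _)).2 hi)⟩

lemma exists_continuous_farFaces_subordinate [Finite ι] [NormalSpace X] {U : ι → Set X}
    (hU : ∀ i, IsOpen (U i)) (hcover : ∀ x, ∃ i, x ∈ U i) :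
    ∃ w : X → ι → ℝ, Continuous w ∧ ∀ x, w x ∈ farFaces ι ∧
      (∀ i, w x i ∈ Icc 0 1) ∧ ∀ i, w x i ≠ 0 → x ∈ U i := by
  have := Fintype.ofFinite ι
  obtain ⟨p, hp⟩ := PartitionOfUnity.exists_isSubordinate_of_locallyFinite isClosed_univ U hU
    (locallyFinite_of_finite U) fun x _ => mem_iUnion.2 (hcover x)
  let P : X → ι → ℝ := fun x i => p i x
  have hP : Continuous P := continuous_pi fun i => (p i).continuous
  have hpos : ∀ x, 0 < ‖P x‖ := by
    intro x
    obtain ⟨i, hi⟩ := p.exists_pos (mem_univ x)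
    exact norm_pos_iff.2 fun h => hi.ne' (congrFun h i)
  have hle : ∀ x i, P x i ≤ ‖P x‖ := fun x i => (le_abs_self _).trans (norm_le_pi_norm (P x) i)
  refine ⟨fun x => ‖P x‖⁻¹ • P x, (hP.norm.inv₀ fun x => (hpos x).ne').smul hP, fun x =>
    ⟨?_, fun i => ⟨mul_nonneg (inv_nonneg.2 (hpos x).le) (p.nonneg i x), ?_⟩, fun i hi => ?_⟩⟩
  · have : Nonempty ι := (hcover x).nonempty
    obtain ⟨i, hi⟩ := exists_norm_apply_eq_norm (P x)
    have hPi : P x i = ‖P x‖ := (Real.norm_of_nonneg (p.nonneg i x)).symm.trans hi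
    exact ⟨i, by simp only [Pi.smul_apply, smul_eq_mul, hPi, inv_mul_cancel₀ (hpos x).ne']⟩
  · exact (inv_mul_le_one₀ (hpos x)).2 (hle x i)
  · exact hp i (subset_tsupport _ (right_ne_zero_of_mul hi))

theorem exists_continuous_selection [CompactSpace X] [T2Space X] (hX : OstrandDimLE X k)
    (hφ : ∀ i, LowerLocallyConstant (φ i)) (hA : ∀ x, IsAspherical k (φ · x)) :
    ∃ f : X → Y, Continuous f ∧ ∀ x, f x ∈ φ k x := by
  classical
  obtain _ | _ := isEmpty_or_nonempty X
  · exact ⟨isEmptyElim, continuous_of_const isEmptyElim, isEmptyElim⟩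
  obtain ⟨S⟩ := NerveMap.nonempty_of_isAspherical hφ hA le_rfl
  obtain ⟨U, hU, hUcell, hcover, hinj⟩ := hX S.ι S.level (fun c => interior (S.cell c))
    (fun _ => isOpen_interior) fun l hl => S.exists_mem_interior l (Nat.lt_succ_of_le hl)
  obtain ⟨w, hw, hwU⟩ := exists_continuous_farFaces_subordinate hU hcover
  let J : X → Finset S.ι := fun x => (toFinite {c | x ∈ U c}).toFinset
  have hmemJ : ∀ {x c}, c ∈ J x ↔ x ∈ U c := fun {x c} => Finite.mem_toFinset _
  have hJ : ∀ x, J x ∈ rainbowNerve S.level S.cell {x} := fun x =>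
    ⟨by simpa [J] using hinj x, x, rfl, fun c hc =>
      interior_subset (hUcell c (hmemJ.1 hc))⟩
  have hwJ : ∀ x, w x ∈ cubeFace (J x) ∩ farFaces S.ι := fun x =>
    ⟨mem_cubeFace.2 ⟨(hwU x).2.1, fun c hc => by_contra fun h =>
      hc (hmemJ.2 ((hwU x).2.2 c h))⟩, (hwU x).1⟩
  refine ⟨fun x => S.toFun (w x), S.continuousOn.comp_continuous hw fun x => ⟨?_, (hwU x).1⟩,
    fun x => ?_⟩
  · exact cubeFace_subset_cubicalCone (rainbowNerve_mono (subset_univ {x}) (hJ x)) (hwJ x).1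
  · have hcard : (J x).card ≤ k + 1 := card_le_of_mem_rainbowNerve S.level_lt (hJ x)
    exact (hA x).monotoneOn (mem_Iic.2 (by omega)) (mem_Iic.2 le_rfl) (by omega)
      (S.mapsTo x _ (hJ x) (hwJ x))

end Nerve

section Sphere

variable {ι : Type*}

/-- The open cubes of side `1 / N`, for `N > 0`, of a lattice shifted diagonally by `θ / N`. -/
def latticeCube (N θ : ℝ) (z : ι → ℤ) : Set (ι → ℝ) :=
  {x | ∀ j, N * x j - θ ∈ Ioo (z j : ℝ) (z j + 1)}

lemma isOpen_latticeCube [Finite ι] (N θ : ℝ) (z : ι → ℤ) : IsOpen (latticeCube N θ z) := by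
  simp only [latticeCube, ofPred_forall]
  exact isOpen_iInter_of_finite fun j => isOpen_Ioo.preimage (by fun_prop)

lemma eq_of_mem_latticeCube {N θ : ℝ} {z z' : ι → ℤ} {x : ι → ℝ} (hx : x ∈ latticeCube N θ z)
    (hx' : x ∈ latticeCube N θ z') : z = z' :=
  funext fun j => (Int.floor_eq_iff.2 ⟨(hx j).1.le, (hx j).2⟩).symm.trans
    (Int.floor_eq_iff.2 ⟨(hx' j).1.le, (hx' j).2⟩)

lemma dist_lt_of_mem_latticeCube [Fintype ι] {N θ r : ℝ} (hr : 0 < r) (hN : 1 / r < N)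
    {z : ι → ℤ} {x y : ι → ℝ} (hx : x ∈ latticeCube N θ z) (hy : y ∈ latticeCube N θ z) :
    dist x y < r := by
  have hN0 : 0 < N := (one_div_pos.2 hr).trans hN
  refine (dist_pi_lt_iff hr).2 fun j => ?_
  have hNd : N * dist (x j) (y j) < 1 := by
    calc N * dist (x j) (y j) = |N * x j - N * y j| := by
          rw [← mul_sub, abs_mul, abs_of_pos hN0, Real.dist_eq]
      _ < 1 := abs_sub_lt_iff.2
          ⟨by linarith [(hx j).2, (hy j).1], by linarith [(hx j).1, (hy j).2]⟩
  rw [div_lt_iff₀ hr] at hN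
  exact lt_of_mul_lt_mul_left (hNd.trans hN) hN0.le

lemma exists_mem_latticeCube {N θ : ℝ} {x : ι → ℝ} (hθ : θ ∈ Ico 0 1)
    (h : ∀ j, Int.fract (N * x j) ≠ θ) : ∃ z, x ∈ latticeCube N θ z := by
  refine ⟨fun j => ⌊N * x j - θ⌋, fun j => ⟨(Int.floor_le _).lt_of_ne fun hj => h j ?_,
    Int.lt_floor_add_one _⟩⟩
  rw [Int.fract_eq_iff]
  exact ⟨hθ.1, hθ.2, ⌊N * x j - θ⌋, by linarith⟩

lemma exists_forall_ne_of_notMem_range [Finite ι] {α : Type*} {t θ : ι → α}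
    (hθ : Function.Injective θ) {j₀ : ι} (hj₀ : t j₀ ∉ range θ) : ∃ l, ∀ j, t j ≠ θ l := by
  by_contra! h
  choose σ hσ using h
  have hσ_inj : Function.Injective σ := fun l l' hll' => hθ (by rw [← hσ l, hll', hσ l'])
  obtain ⟨l, rfl⟩ := Finite.surjective_of_injective hσ_inj j₀
  exact hj₀ ⟨l, (hσ l).symm⟩

variable {k : ℕ}

lemma exists_mem_latticeCube_of_mem_sphere {x : Fin (k + 1) → ℝ} (hx : x ∈ sphere 0 1) (N : ℕ) :
    ∃ l : Fin (k + 1), ∃ z, x ∈ latticeCube N ((l + 1) / (k + 2)) z := by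
  have hk : (0 : ℝ) < k + 2 := by positivity
  let θ : Fin (k + 1) → ℝ := fun l => (l + 1) / (k + 2)
  have hθ_inj : Function.Injective θ := fun l l' h => by
    simpa [θ, div_left_inj' hk.ne', Fin.val_inj] using h
  obtain ⟨j₀, hj₀⟩ : ∃ j₀, Int.fract (N * x j₀) = 0 := by
    obtain ⟨j₀, hj₀⟩ := exists_norm_apply_eq_norm x
    rw [mem_sphere_zero_iff_norm.1 hx, Real.norm_eq_abs, abs_eq zero_le_one] at hj₀
    refine ⟨j₀, Int.fract_eq_zero_iff.2 ?_⟩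
    obtain h | h := hj₀
    · exact ⟨N, by simp [h]⟩
    · exact ⟨-N, by simp [h]⟩
  have hj₀θ : Int.fract (N * x j₀) ∉ range θ := by
    rintro ⟨l, hl⟩
    have : 0 < θ l := by positivity
    exact this.ne' (hl.trans hj₀)
  obtain ⟨l, hl⟩ := exists_forall_ne_of_notMem_range (t := fun j => Int.fract (N * x j)) hθ_inj hj₀θ
  have hl_lt : (l : ℝ) < k + 1 := by exact_mod_cast l.2
  exact ⟨l, exists_mem_latticeCube ⟨by positivity, (div_lt_one hk).2 (by linarith)⟩ hl⟩

lemma ostrandDimLE_sphere (k : ℕ) : OstrandDimLE (sphere (0 : Fin (k + 1) → ℝ) 1) k := by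
  intro ι _ level W hW hcover
  have hlevel : ∀ (x : sphere (0 : Fin (k + 1) → ℝ) 1) (l : Fin (k + 1)),
      ∃ c, level c = l ∧ x ∈ W c := fun x l => hcover l (Nat.lt_succ_iff.1 l.2) x
  choose c hc hxc using hlevel
  obtain ⟨r, hr, hball⟩ := lebesgue_number_lemma_of_metric isCompact_univ
    (fun x => isOpen_iInter_of_finite fun l => hW (c x l))
    fun x _ => mem_iUnion.2 ⟨x, mem_iInter.2 (hxc x)⟩
  obtain ⟨N, hN⟩ := exists_nat_gt (1 / r)
  let cube : Fin (k + 1) → (Fin (k + 1) → ℤ) → Set (Fin (k + 1) → ℝ) := fun l z =>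
    latticeCube N ((l + 1) / (k + 2)) z
  have hchoice : ∀ (l : Fin (k + 1)) z, ∃ d, level d = l ∧ ∀ x, ↑x ∈ cube l z → x ∈ W d := by
    intro l z
    by_cases h : ∃ x : sphere (0 : Fin (k + 1) → ℝ) 1, ↑x ∈ cube l z
    · obtain ⟨x, hx⟩ := h
      obtain ⟨y, hy⟩ := hball x (mem_univ x)
      exact ⟨c y l, hc y l, fun x' hx' =>
        mem_iInter.1 (hy (dist_lt_of_mem_latticeCube hr hN hx' hx)) l⟩
    · have : Nonempty (sphere (0 : Fin (k + 1) → ℝ) 1) :=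
        (NormedSpace.sphere_nonempty.2 zero_le_one).to_subtype
      exact ⟨c (Classical.arbitrary _) l, hc _ l, fun x hx => (h ⟨x, hx⟩).elim⟩
  choose d hd hdW using hchoice
  refine ⟨fun e => {x | ∃ l z, d l z = e ∧ ↑x ∈ cube l z}, fun e => ?_, ?_, fun x => ?_, ?_⟩
  · simp only [ofPred_exists]
    refine isOpen_iUnion fun l => isOpen_iUnion fun z => isOpen_const.and ?_
    exact (isOpen_latticeCube _ _ z).preimage continuous_subtype_val
  · rintro e x ⟨l, z, rfl, hx⟩
    exact hdW l z x hx
  · obtain ⟨l, z, hx⟩ := exists_mem_latticeCube_of_mem_sphere x.2 N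
    exact ⟨d l z, l, z, rfl, hx⟩
  · rintro x _ ⟨l, z, rfl, hx⟩ _ ⟨l', z', rfl, hx'⟩ hll'
    obtain rfl : l = l' := Fin.val_injective (by rw [← hd l z, hll', hd l' z'])
    rw [eq_of_mem_latticeCube hx hx']

end Sphere

section Neighbourhoods

open NormedSpace

lemma lowerLocallyConstant_ball_inter {X Y : Type*} [TopologicalSpace X] [PseudoMetricSpace Y]
    {g : X → Y} (hg : Continuous g) (r : ℝ) (S : Set Y) :
    LowerLocallyConstant fun x => ball (g x) r ∩ S := by
  intro K hK
  simp only [subset_inter_iff, ofPred_and]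
  refine IsOpen.inter (isOpen_iff_eventually.2 fun x hx => ?_) isOpen_const
  have hopen : IsOpen {p : X × Y | p.2 ∈ ball (g p.1) r} :=
    isOpen_lt (by fun_prop : Continuous fun p : X × Y => dist p.2 (g p.1)) continuous_const
  exact hK.eventually_forall_of_forall_eventually fun y hy => hopen.mem_nhds (hx hy)

variable {E V : Type*} [SeminormedAddCommGroup E] [NormedSpace ℝ E]
  [NormedAddCommGroup V] [NormedSpace ℝ V] [ProperSpace V]

lemma continuous_norm_smul_comp_normalize {w : V → E} (hw : ContinuousOn w (sphere 0 1)) :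
    Continuous fun v => ‖v‖ • w (normalize v) := by
  have hsphere : ∀ v : V, v ≠ 0 → normalize v ∈ sphere (0 : V) 1 := fun v hv =>
    mem_sphere_zero_iff_norm.2 (norm_normalize hv)
  obtain ⟨C, hC⟩ := (isCompact_sphere (0 : V) 1).exists_bound_of_continuousOn hw
  rw [continuous_iff_continuousAt]
  intro v
  obtain rfl | hv := eq_or_ne v 0
  · have hbound : ∀ v : V, ‖‖v‖ • w (normalize v)‖ ≤ ‖v‖ * C := by
      intro v
      obtain rfl | hv := eq_or_ne v 0
      · simp
      · rw [norm_smul, norm_norm]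
        exact mul_le_mul_of_nonneg_left (hC _ (hsphere v hv)) (norm_nonneg v)
    have hlim : Filter.Tendsto (fun v : V => ‖v‖ * C) (𝓝 0) (𝓝 0) :=
      (by fun_prop : Continuous fun v : V => ‖v‖ * C).tendsto' _ _ (by simp)
    simpa [ContinuousAt] using squeeze_zero_norm hbound hlim
  · have hnormalize : ContinuousOn (normalize : V → V) {0}ᶜ :=
      (continuous_norm.continuousOn.inv₀ fun v hv => norm_ne_zero_iff.2 hv).smul continuousOn_id
    exact (continuous_norm.continuousOn.smul (hw.comp hnormalize hsphere)).continuousAt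
      (isOpen_compl_singleton.mem_nhds hv)

lemma exists_extension_closedBall_of_dist_lt {ε : ℝ} (hε : 0 < ε) {g h : V → E}
    (hg : ContinuousOn g (sphere 0 1)) (hh : ContinuousOn h (closedBall 0 1))
    (hgh : ∀ p ∈ sphere (0 : V) 1, dist (g p) (h p) < ε) :
    ∃ H : V → E, ContinuousOn H (closedBall 0 1) ∧ EqOn H g (sphere 0 1) ∧
      ∀ v ∈ closedBall (0 : V) 1, dist (H v) (h v) < ε := by
  refine ⟨fun v => h v + ‖v‖ • (g - h) (normalize v), hh.add (continuous_norm_smul_comp_normalize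
    (hg.sub (hh.mono sphere_subset_closedBall))).continuousOn, fun p hp => ?_, fun v hv => ?_⟩
  · rw [mem_sphere_zero_iff_norm] at hp
    simp [hp, normalize_eq_self_of_norm_eq_one hp]
  · rw [dist_self_add_left, norm_smul, norm_norm]
    obtain rfl | hv0 := eq_or_ne v 0
    · simpa
    · refine (mul_le_of_le_one_left (norm_nonneg _) (mem_closedBall_zero_iff.1 hv)).trans_lt ?_
      rw [Pi.sub_apply, ← dist_eq_norm]
      exact hgh _ (mem_sphere_zero_iff_norm.2 (norm_normalize hv0))

theorem embed_of_neighbourhoods_general {k : ℕ} {S T : Set E} (r : ℕ → ℝ) (hST : EmbedK k S T)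
    (hr : ∀ y, ∀ i < k, EmbedK i (ball y (r i) ∩ S) (ball y (r (i + 1)) ∩ S)) :
    EmbedK k (ONbhd (r 0) S) (ONbhd (r k) T) := by
  have hdim : Module.finrank ℝ (Fin (k + 1) → ℝ) = k + 1 := Module.finrank_fin_fun ℝ
  rw [embedK_iff_extendsOver_closedBall hdim] at hST ⊢
  intro g hg hgS
  have hasph : ∀ p ∈ sphere (0 : Fin (k + 1) → ℝ) 1,
      IsAspherical k fun i => ball (g p) (r i) ∩ S := by
    refine fun p hp => ⟨?_, hr (g p)⟩
    obtain ⟨s, hs, hps⟩ := mem_iUnion₂.1 (hgS hp)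
    exact ⟨s, mem_ball_comm.1 hps, hs⟩
  obtain ⟨f', hf', hf'S⟩ := exists_continuous_selection (ostrandDimLE_sphere k)
    (fun i =>
      lowerLocallyConstant_ball_inter (continuousOn_iff_continuous_domRestrict.1 hg) (r i) S)
    fun p => hasph p p.2
  obtain ⟨f, hf, hff'⟩ := exists_continuousOn_eqOn_of_continuous hf'
  have hfS : ∀ p ∈ sphere (0 : Fin (k + 1) → ℝ) 1, f p ∈ ball (g p) (r k) ∩ S := fun p hp =>
    hff' ⟨p, hp⟩ ▸ hf'S ⟨p, hp⟩
  obtain ⟨h, hh, hhT, hhf⟩ := hST f hf fun p hp => (hfS p hp).2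
  have hgh : ∀ p ∈ sphere (0 : Fin (k + 1) → ℝ) 1, dist (g p) (h p) < r k := fun p hp => by
    rw [hhf hp]
    exact mem_ball'.1 (hfS p hp).1
  obtain ⟨p, hp⟩ : (sphere (0 : Fin (k + 1) → ℝ) 1).Nonempty :=
    NormedSpace.sphere_nonempty.2 zero_le_one
  obtain ⟨H, hH, hHg, hHh⟩ := exists_extension_closedBall_of_dist_lt
    (dist_nonneg.trans_lt (hgh p hp)) hg hh hgh
  exact ⟨H, hH, fun v hv => mem_iUnion₂.2 ⟨h v, hhT hv, hHh v hv⟩, hHg⟩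

end Neighbourhoods

/-- Corollary 4.4. -/
theorem embed_of_neighbourhoods
    {E : Type*} [NormedAddCommGroup E] [NormedSpace ℝ E]
    (k : ℕ) (δ : ℝ → ℝ) (hδpos : ∀ ε > 0, 0 < δ ε)
    (S T : Set E) (hS : S.Nonempty) (hST : S ⊆ T)
    (hSkT : EmbedK k S T)
    (hLC : ∀ y : E, ∀ ε > (0 : ℝ), ∀ i < k, EmbedK i (ball y (δ ε) ∩ S) (ball y ε ∩ S)) :
    ∀ ε > (0 : ℝ), EmbedK k (ONbhd (δ^[k] ε) S) (ONbhd ε T) := by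
  intro ε hε
  have hpos : ∀ m, 0 < δ^[m] ε := Function.Iterate.rec (0 < ·) hε hδpos
  simpa using embed_of_neighbourhoods_general (fun i => δ^[k - i] ε) hSkT fun y i hi => by
    rw [show k - i = k - (i + 1) + 1 by omega, Function.iterate_succ_apply']
    exact hLC y _ (hpos _) i hi
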